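/- Let n > 2m ≥ 2 and k₁ ≥ 0 be integers, and let ε > 0 and η be reals with η + k₁ + 1 > 2m. For x, y ∈ ℝⁿ define K(x,y) := ∫_{ℝⁿ} ∫_{ℝⁿ} ⟨z₁⟩^{-n−ε} ⟨z₂⟩^{-n−ε} · ( |x−z₁|^{-η−1} + |x−z₁|^{k₁−2m−1/2} ) · 𝟙_{\{|x−z₁| ≥ 2⟨z₂−y⟩\}} · |x−z₁|^{-(n−2m+k₁)} dz₁ dz₂. Then K is admissible, i.e. sup_{x} ∫_{ℝⁿ} K(x,y) dy + sup_{y} ∫_{ℝⁿ} K(x,y) dx < ∞. -/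

import Mathlib

open MeasureTheory ENNReal

open Function Module

/-!
Averaging the translates `(x, y) ↦ L (x - z₁) (z₂ - y)` of an admissible kernel `L` against
integrable weights in `z₁` and `z₂` gives an admissible kernel, by Tonelli and translation
invariance. Here `L` is a sum of two kernels `‖v‖ ^ (-r)` restricted to `c ⟨w⟩ ≤ ‖v‖`, with
`r = n + (η + k + 1 - 2 m)` and `r = n + 1 / 2`. Both exponents exceed the dimension `n`. On the
support `‖v‖` dominates both `⟨v⟩` and `⟨w⟩`, so such a kernel is at most a constant times
`⟨v⟩ ^ (-r)` and at most a constant times `⟨w⟩ ^ (-r)`, which are integrable.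
-/

section Schur

variable {X Y Z : Type*} [MeasurableSpace X] [MeasurableSpace Y] [MeasurableSpace Z]
  {μ : Measure X} {ν : Measure Y} {κ : Measure Z}

/-- A measurable kernel is admissible if its integrals over either variable are uniformly bounded in
the other one. Finiteness of the sum of the two suprema is split into two fields. -/
structure IsAdmissibleKernel (μ : Measure X) (ν : Measure Y) (K : X → Y → ℝ≥0∞) : Prop where
  measurable_uncurry : Measurable (uncurry K)
  iSup_lintegral_right_lt_top : ⨆ x, ∫⁻ y, K x y ∂ν < ∞
  iSup_lintegral_left_lt_top : ⨆ y, ∫⁻ x, K x y ∂μ < ∞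

namespace IsAdmissibleKernel

variable {K L : X → Y → ℝ≥0∞}

lemma exists_lintegral_le (hK : IsAdmissibleKernel μ ν K) :
    ∃ B : ℝ, (∀ x, ∫⁻ y, K x y ∂ν ≤ ENNReal.ofReal B) ∧
      ∀ y, ∫⁻ x, K x y ∂μ ≤ ENNReal.ofReal B := by
  set M := max (⨆ x, ∫⁻ y, K x y ∂ν) (⨆ y, ∫⁻ x, K x y ∂μ)
  have hM : M ≠ ∞ := (max_lt hK.iSup_lintegral_right_lt_top hK.iSup_lintegral_left_lt_top).ne
  refine ⟨M.toReal, fun x ↦ ?_, fun y ↦ ?_⟩ <;> rw [ENNReal.ofReal_toReal hM]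
  · exact (le_iSup (fun x ↦ ∫⁻ y, K x y ∂ν) x).trans (le_max_left _ _)
  · exact (le_iSup (fun y ↦ ∫⁻ x, K x y ∂μ) y).trans (le_max_right _ _)

lemma of_le {f : X → ℝ≥0∞} {g : Y → ℝ≥0∞} (hK : Measurable (uncurry K))
    (hf : ∫⁻ x, f x ∂μ < ∞) (hg : ∫⁻ y, g y ∂ν < ∞)
    (hKf : ∀ x y, K x y ≤ f x) (hKg : ∀ x y, K x y ≤ g y) : IsAdmissibleKernel μ ν K where
  measurable_uncurry := hK
  iSup_lintegral_right_lt_top := (iSup_le fun x ↦ lintegral_mono (hKg x)).trans_lt hg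
  iSup_lintegral_left_lt_top := (iSup_le fun y ↦ lintegral_mono (hKf · y)).trans_lt hf

lemma add (hK : IsAdmissibleKernel μ ν K) (hL : IsAdmissibleKernel μ ν L) :
    IsAdmissibleKernel μ ν fun x y ↦ K x y + L x y where
  measurable_uncurry := hK.measurable_uncurry.add hL.measurable_uncurry
  iSup_lintegral_right_lt_top := by
    simp_rw [lintegral_add_left hK.measurable_uncurry.of_uncurry_left]
    exact (iSup_le fun x ↦ add_le_add (le_iSup _ x) (le_iSup _ x)).trans_lt
      (ENNReal.add_lt_top.2 ⟨hK.iSup_lintegral_right_lt_top, hL.iSup_lintegral_right_lt_top⟩)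
  iSup_lintegral_left_lt_top := by
    simp_rw [lintegral_add_left hK.measurable_uncurry.of_uncurry_right]
    exact (iSup_le fun y ↦ add_le_add (le_iSup _ y) (le_iSup _ y)).trans_lt
      (ENNReal.add_lt_top.2 ⟨hK.iSup_lintegral_left_lt_top, hL.iSup_lintegral_left_lt_top⟩)

end IsAdmissibleKernel

lemma lintegral_lintegral_mul_le [SFinite ν] [SFinite κ] {c : Z → ℝ≥0∞} {F : Z → Y → ℝ≥0∞}
    {M : ℝ≥0∞} (hc : Measurable c) (hF : Measurable (uncurry F)) (hM : ∀ z, ∫⁻ y, F z y ∂ν ≤ M) :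
    ∫⁻ y, ∫⁻ z, c z * F z y ∂κ ∂ν ≤ (∫⁻ z, c z ∂κ) * M :=
  calc ∫⁻ y, ∫⁻ z, c z * F z y ∂κ ∂ν = ∫⁻ z, ∫⁻ y, c z * F z y ∂ν ∂κ :=
        lintegral_lintegral_swap (by fun_prop)
    _ = ∫⁻ z, c z * ∫⁻ y, F z y ∂ν ∂κ := by
        simp_rw [lintegral_const_mul _ hF.of_uncurry_left]
    _ ≤ ∫⁻ z, c z * M ∂κ := by gcongr with z; exact hM z
    _ = (∫⁻ z, c z ∂κ) * M := lintegral_mul_const M hc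

end Schur

section Translation

variable {G H : Type*}
  [AddGroup G] [MeasurableSpace G] [MeasurableAdd₂ G] [MeasurableNeg G]
  [AddGroup H] [MeasurableSpace H] [MeasurableAdd₂ H] [MeasurableNeg H]
  {μ : Measure G} [SFinite μ] [μ.IsAddRightInvariant]
  {ν : Measure H} [SFinite ν] [ν.IsAddLeftInvariant] [ν.IsNegInvariant]

theorem IsAdmissibleKernel.lintegral_mul_sub {L : G → H → ℝ≥0∞} (hL : IsAdmissibleKernel μ ν L)
    {a : G → ℝ≥0∞} {b : H → ℝ≥0∞} (ha : Measurable a) (hb : Measurable b)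
    (ha_fin : ∫⁻ z, a z ∂μ < ∞) (hb_fin : ∫⁻ z, b z ∂ν < ∞) :
    IsAdmissibleKernel μ ν fun x y ↦
      ∫⁻ z₁, ∫⁻ z₂, a z₁ * b z₂ * L (x - z₁) (z₂ - y) ∂ν ∂μ := by
  have hLm := hL.measurable_uncurry
  have hab : Measurable fun z : G × H ↦ a z.1 * b z.2 := by fun_prop
  have hab_fin : ∫⁻ z, a z.1 * b z.2 ∂μ.prod ν < ∞ := by
    rw [lintegral_prod_mul ha.aemeasurable hb.aemeasurable]
    exact ENNReal.mul_lt_top ha_fin hb_fin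
  have h_prod (x : G) (y : H) : ∫⁻ z₁, ∫⁻ z₂, a z₁ * b z₂ * L (x - z₁) (z₂ - y) ∂ν ∂μ =
      ∫⁻ z, a z.1 * b z.2 * L (x - z.1) (z.2 - y) ∂μ.prod ν := by
    rw [lintegral_prod]
    fun_prop
  simp_rw [h_prod]
  refine ⟨by fun_prop, ?_, ?_⟩
  · refine lt_of_le_of_lt (iSup_le fun x ↦ lintegral_lintegral_mul_le hab (by fun_prop) fun z ↦ ?_)
      (ENNReal.mul_lt_top hab_fin hL.iSup_lintegral_right_lt_top)
    rw [lintegral_sub_left_eq_self (fun w ↦ L (x - z.1) w)]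
    exact le_iSup (fun v ↦ ∫⁻ w, L v w ∂ν) (x - z.1)
  · refine lt_of_le_of_lt (iSup_le fun y ↦ lintegral_lintegral_mul_le hab (by fun_prop) fun z ↦ ?_)
      (ENNReal.mul_lt_top hab_fin hL.iSup_lintegral_left_lt_top)
    rw [lintegral_sub_right_eq_self (fun v ↦ L v (z.2 - y))]
    exact le_iSup (fun w ↦ ∫⁻ v, L v w ∂μ) (z.2 - y)

end Translation

section JapaneseBracket

variable {E : Type*} [NormedAddCommGroup E]

/-- The Japanese bracket `⟨x⟩ = (1 + ‖x‖²)^{1/2}`. -/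
noncomputable def japaneseBracket (x : E) : ℝ := √(1 + ‖x‖ ^ 2)

lemma one_le_japaneseBracket (x : E) : 1 ≤ japaneseBracket x :=
  Real.one_le_sqrt.2 (le_add_of_nonneg_right (by positivity))

lemma japaneseBracket_pos (x : E) : 0 < japaneseBracket x :=
  one_pos.trans_le (one_le_japaneseBracket x)

lemma japaneseBracket_le_one_add_norm (x : E) : japaneseBracket x ≤ 1 + ‖x‖ :=
  sqrt_one_add_norm_sq_le x

variable [MeasurableSpace E] [BorelSpace E]

@[fun_prop]
lemma measurable_japaneseBracket : Measurable (japaneseBracket : E → ℝ) := by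
  unfold japaneseBracket
  fun_prop

variable [NormedSpace ℝ E] [FiniteDimensional ℝ E] (μ : Measure E) [μ.IsAddHaarMeasure]

lemma integrable_japaneseBracket_rpow_neg {r : ℝ} (hr : finrank ℝ E < r) :
    Integrable (fun x ↦ japaneseBracket x ^ (-r)) μ := by
  convert integrable_rpow_neg_one_add_norm_sq (μ := μ) hr using 2 with x
  rw [japaneseBracket, Real.sqrt_eq_rpow, ← Real.rpow_mul (by positivity)]
  ring_nf

end JapaneseBracket

section TruncatedPower

variable {E : Type*} [NormedAddCommGroup E]

/-- The kernel `‖v‖ ^ (-r)` cut off to the region `c ⟨w⟩ ≤ ‖v‖`; the theorem concerns `c = 2`. -/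
noncomputable def truncatedPowerKernel (c r : ℝ) (v w : E) : ℝ≥0∞ :=
  if c * japaneseBracket w ≤ ‖v‖ then ENNReal.ofReal (‖v‖ ^ (-r)) else 0

lemma truncatedPowerKernel_le {c C r : ℝ} (hC : 0 < C) (hr : 0 ≤ r) {u v w : E}
    (hu : c * japaneseBracket w ≤ ‖v‖ → japaneseBracket u ≤ ‖v‖ * C) :
    truncatedPowerKernel c r v w ≤ ENNReal.ofReal ((japaneseBracket u / C) ^ (-r)) := by
  unfold truncatedPowerKernel
  split_ifs with hvw
  · exact ENNReal.ofReal_le_ofReal <| Real.rpow_le_rpow_of_nonpos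
      (div_pos (japaneseBracket_pos u) hC) ((div_le_iff₀ hC).2 (hu hvw)) (neg_nonpos.2 hr)
  · exact zero_le

lemma ofReal_rpow_add_mul_ite_mul_ofReal_rpow {c : ℝ} (hc : 0 < c) (p q s : ℝ) (v w : E) :
    (ENNReal.ofReal (‖v‖ ^ p) + ENNReal.ofReal (‖v‖ ^ q)) *
        (if c * japaneseBracket w ≤ ‖v‖ then 1 else 0) * ENNReal.ofReal (‖v‖ ^ (-s)) =
      truncatedPowerKernel c (s - p) v w + truncatedPowerKernel c (s - q) v w := by
  unfold truncatedPowerKernel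
  split_ifs with hvw
  · have hv : 0 < ‖v‖ := (mul_pos hc (japaneseBracket_pos w)).trans_le hvw
    rw [mul_one, add_mul, ← ENNReal.ofReal_mul (by positivity),
      ← ENNReal.ofReal_mul (by positivity), ← Real.rpow_add hv, ← Real.rpow_add hv]
    ring_nf
  · simp only [mul_zero, zero_mul, add_zero]

variable [MeasurableSpace E] [BorelSpace E]

lemma measurable_uncurry_truncatedPowerKernel (c r : ℝ) :
    Measurable (uncurry (truncatedPowerKernel c r : E → E → ℝ≥0∞)) :=
  .ite (measurableSet_le (by fun_prop) (by fun_prop)) (by fun_prop) measurable_const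

variable [NormedSpace ℝ E] [FiniteDimensional ℝ E] (μ : Measure E) [μ.IsAddHaarMeasure]

theorem isAdmissibleKernel_truncatedPowerKernel {c r : ℝ} (hc : 0 < c) (hr : finrank ℝ E < r) :
    IsAdmissibleKernel μ μ (truncatedPowerKernel c r : E → E → ℝ≥0∞) := by
  have hr_nonneg : 0 ≤ r := (Nat.cast_nonneg _).trans hr.le
  have hC : 0 < 1 + 1 / c := by positivity
  have h_fin : ∫⁻ u : E, ENNReal.ofReal ((japaneseBracket u / (1 + 1 / c)) ^ (-r)) ∂μ < ∞ := by
    simp_rw [Real.div_rpow (japaneseBracket_pos _).le hC.le]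
    exact ((integrable_japaneseBracket_rpow_neg μ hr).div_const _).lintegral_lt_top
  have h_right {v w : E} (hvw : c * japaneseBracket w ≤ ‖v‖) : japaneseBracket w ≤ ‖v‖ / c :=
    (le_div_iff₀' hc).2 hvw
  -- Where `1 ≤ ⟨w⟩ ≤ ‖v‖ / c`, both `⟨v⟩ ≤ 1 + ‖v‖` and `⟨w⟩` are at most `(1 + 1 / c) ‖v‖`.
  refine .of_le (measurable_uncurry_truncatedPowerKernel c r) h_fin h_fin
    (fun v w ↦ truncatedPowerKernel_le hC hr_nonneg fun hvw ↦ ?_)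
    (fun v w ↦ truncatedPowerKernel_le hC hr_nonneg fun hvw ↦ ?_) <;> rw [mul_one_add, mul_one_div]
  · linarith [japaneseBracket_le_one_add_norm v, one_le_japaneseBracket w, h_right hvw]
  · linarith [norm_nonneg v, h_right hvw]

end TruncatedPower

theorem stmt_16_general {E : Type*} [NormedAddCommGroup E] [NormedSpace ℝ E]
    [FiniteDimensional ℝ E] [MeasurableSpace E] [BorelSpace E] (μ : Measure E)
    [μ.IsAddHaarMeasure] {n : ℕ} (hn : finrank ℝ E = n) {c ε η k m : ℝ} (hc : 0 < c) (hε : 0 < ε)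
    (hcond : 2 * m < η + k + 1) :
    IsAdmissibleKernel μ μ fun x y : E ↦ ∫⁻ z₁, ∫⁻ z₂,
      ENNReal.ofReal (japaneseBracket z₁ ^ (-(n : ℝ) - ε)) *
      ENNReal.ofReal (japaneseBracket z₂ ^ (-(n : ℝ) - ε)) *
      (ENNReal.ofReal (‖x - z₁‖ ^ (-η - 1)) +
        ENNReal.ofReal (‖x - z₁‖ ^ (k - 2 * m - 1 / 2))) *
      (if c * japaneseBracket (z₂ - y) ≤ ‖x - z₁‖ then 1 else 0) *
      ENNReal.ofReal (‖x - z₁‖ ^ (-((n : ℝ) - 2 * m + k))) ∂μ ∂μ := by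
  have hn_real : (finrank ℝ E : ℝ) = n := congrArg Nat.cast hn
  set a : E → ℝ≥0∞ := fun z ↦ ENNReal.ofReal (japaneseBracket z ^ (-(n : ℝ) - ε))
  have ha : Measurable a := by fun_prop
  have ha_fin : ∫⁻ z, a z ∂μ < ∞ := by
    simp_rw [a, ← neg_add']
    exact (integrable_japaneseBracket_rpow_neg μ (by linarith)).lintegral_lt_top
  have h_first : IsAdmissibleKernel (X := E) μ μ
      (truncatedPowerKernel c (n - 2 * m + k - (-η - 1))) :=
    isAdmissibleKernel_truncatedPowerKernel μ hc (by linarith)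
  have h_second : IsAdmissibleKernel (X := E) μ μ
      (truncatedPowerKernel c (n - 2 * m + k - (k - 2 * m - 1 / 2))) :=
    isAdmissibleKernel_truncatedPowerKernel μ hc (by linarith)
  simpa only [← ofReal_rpow_add_mul_ite_mul_ofReal_rpow hc, ← mul_assoc] using
    (h_first.add h_second).lintegral_mul_sub ha ha ha_fin ha_fin

/-- Admissibility of the kernel arising in the regime `r₁ ≫ ⟨r₂⟩`. -/
theorem stmt_16 (n m k₁ : ℕ) (hm : 1 ≤ m) (hn : 2 * m < n) (ε η : ℝ)
    (hε : 0 < ε) (hcond : 2 * (m : ℝ) < η + k₁ + 1)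
    (K : EuclideanSpace ℝ (Fin n) → EuclideanSpace ℝ (Fin n) → ℝ≥0∞)
    (hK : ∀ x y, K x y =
      ∫⁻ z₁, ∫⁻ z₂,
        ENNReal.ofReal (Real.sqrt (1 + ‖z₁‖ ^ 2) ^ (-(n : ℝ) - ε)) *
        ENNReal.ofReal (Real.sqrt (1 + ‖z₂‖ ^ 2) ^ (-(n : ℝ) - ε)) *
        (ENNReal.ofReal (‖x - z₁‖ ^ (-η - 1)) +
          ENNReal.ofReal (‖x - z₁‖ ^ ((k₁ : ℝ) - 2 * m - 1 / 2))) *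
        (if 2 * Real.sqrt (1 + ‖z₂ - y‖ ^ 2) ≤ ‖x - z₁‖ then 1 else 0) *
        ENNReal.ofReal (‖x - z₁‖ ^ (-((n : ℝ) - 2 * m + k₁)))) :
    ∃ B : ℝ, (∀ x, ∫⁻ y, K x y ≤ ENNReal.ofReal B) ∧
      (∀ y, ∫⁻ x, K x y ≤ ENNReal.ofReal B) := by
  simp only [hK]
  exact (stmt_16_general volume finrank_euclideanSpace_fin two_pos hε hcond).exists_lintegral_le
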